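/- arXiv:1611.01665 — 5 statements merged into one kernel-verified Lean document; each statement's English description precedes it below -/
import Mathlib

section
/- Let E be a real vector space of finite dimension r with 5 ≤ r, let Q be a negative definite quadratic form on E, and let W be a nonzero finite-dimensional real vector space. If there exists a homomorphism of unital ℝ-algebras from the even subalgebra CliffordAlgebra.even Q to Module.End ℝ W, then 8 divides the dimension of W over ℝ. -/
theorem quat_dvd {V : Type*} [AddCommGroup V] [Module ℝ V] [FiniteDimensional ℝ V]
    (I J : Module.End ℝ V) (hI : I * I = -1) (hJ : J * J = -1) (hIJ : J * I = -(I * J)) :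
    4 ∣ Module.finrank ℝ V := by
  let q : QuaternionAlgebra.Basis (Module.End ℝ V) (-1 : ℝ) 0 (-1) :=
    { i := I, j := J, k := I * J
      i_mul_i := by simp [hI]
      j_mul_j := by simp [hJ]
      i_mul_j := rfl
      j_mul_i := by simp [hIJ] }
  let f : Quaternion ℝ →ₐ[ℝ] Module.End ℝ V := q.liftHom
  let _ : Module (Quaternion ℝ) V := Module.compHom V f.toRingHom
  have _ : IsScalarTower ℝ (Quaternion ℝ) V := ⟨fun a b v => by
    change f (a • b) v = a • f b v
    rw [map_smul]; rfl⟩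
  have := Module.finrank_mul_finrank ℝ (Quaternion ℝ) V
  rw [Quaternion.finrank_eq_four] at this
  exact ⟨_, this.symm⟩

theorem eight_dvd {W : Type*} [AddCommGroup W] [Module ℝ W] [FiniteDimensional ℝ W]
    (A B C D : Module.End ℝ W)
    (hA : ∀ x, A (A x) = -x) (hB : ∀ x, B (B x) = -x) (hC : ∀ x, C (C x) = -x)
    (hD : ∀ x, D (D x) = -x)
    (hAB : ∀ x, B (A x) = - A (B x)) (hAC : ∀ x, C (A x) = - A (C x))
    (hAD : ∀ x, D (A x) = - A (D x)) (hBC : ∀ x, C (B x) = - B (C x))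
    (hBD : ∀ x, D (B x) = - B (D x)) (hCD : ∀ x, D (C x) = - C (D x)) :
    8 ∣ Module.finrank ℝ W := by
  let T : Module.End ℝ W := A * B * C
  have hT : ∀ x, T x = A (B (C x)) := fun x => rfl
  have hTT : ∀ x, T (T x) = x := fun x => by
    simp [hT, hA, hB, hC, hAB, hAC, hBC]
  let P := LinearMap.ker (T - 1)
  let N := LinearMap.ker (T + 1)
  have mP : ∀ x, x ∈ P ↔ T x = x := fun x => by simp [P, sub_eq_zero]
  have mN : ∀ x, x ∈ N ↔ T x = -x := fun x => by simp [N, add_eq_zero_iff_eq_neg]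
  have hc : IsCompl P N := by
    refine IsCompl.of_eq ?_ ?_
    · rw [eq_bot_iff]
      rintro x ⟨h1, h2⟩
      have h1 := (mP x).1 h1
      have h2 := (mN x).1 h2
      rw [h1] at h2
      have h3 : (2 : ℝ) • x = 0 := by
        rw [two_smul]; nth_rewrite 1 [h2]; simp
      simpa using h3
    · rw [eq_top_iff]
      intro x _
      rw [Submodule.mem_sup]
      refine ⟨(1/2 : ℝ) • (x + T x), ?_, (1/2 : ℝ) • (x - T x), ?_, ?_⟩
      · rw [mP, map_smul, map_add, hTT, add_comm]
      · rw [mN, map_smul, map_sub, hTT, ← smul_neg, neg_sub]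
      · module
  have hsum := Submodule.finrank_add_eq_of_isCompl hc
  have hTD : ∀ x, T (D x) = - D (T x) := fun x => by simp [hT, hAD, hBD, hCD]
  have hTA : ∀ x, T (A x) = A (T x) := fun x => by simp [hT, hA, hAB, hAC]
  have hTB : ∀ x, T (B x) = B (T x) := fun x => by simp [hT, hB, hBC, hAB]
  have Dinj : Function.Injective D := fun x y h => by
    have := congrArg D h
    simpa [hD] using this
  have h1 : Module.finrank ℝ P ≤ Module.finrank ℝ N := by
    refine LinearMap.finrank_le_finrank_of_injective
      (f := D.restrict (p := P) (q := N) fun x hx => ?_) fun x y h => ?_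
    · rw [mN, hTD, (mP x).1 hx]
    · exact Subtype.ext (Dinj (congrArg Subtype.val h))
  have h2 : Module.finrank ℝ N ≤ Module.finrank ℝ P := by
    refine LinearMap.finrank_le_finrank_of_injective
      (f := D.restrict (p := N) (q := P) fun x hx => ?_) fun x y h => ?_
    · rw [mP, hTD, (mN x).1 hx]; simp
    · exact Subtype.ext (Dinj (congrArg Subtype.val h))
  have h4 : 4 ∣ Module.finrank ℝ P := by
    refine quat_dvd
      (A.restrict (p := P) (q := P) fun x hx => by rw [mP, hTA, (mP x).1 hx])
      (B.restrict (p := P) (q := P) fun x hx => by rw [mP, hTB, (mP x).1 hx]) ?_ ?_ ?_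
    · ext x; exact hA x
    · ext x; exact hB x
    · ext x; exact hAB x
  omega

/-- If `E` is a real vector space of finite dimension `r ≥ 5`, `Q` is a negative definite
quadratic form on `E`, and `W` is a nonzero finite-dimensional real vector space admitting a
unital `ℝ`-algebra homomorphism from the even Clifford algebra `Cl⁰(E, Q)` to `End ℝ W`,
then `8` divides `dim ℝ W`. -/
theorem stmt_7 {E : Type*} [AddCommGroup E] [Module ℝ E] [FiniteDimensional ℝ E]
    (r : ℕ) (hr : 5 ≤ r) (hdim : Module.finrank ℝ E = r)
    (Q : QuadraticForm ℝ E) (hQ : ∀ x : E, x ≠ 0 → Q x < 0)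
    {W : Type*} [AddCommGroup W] [Module ℝ W] [FiniteDimensional ℝ W] [Nontrivial W]
    (h : Nonempty (CliffordAlgebra.even Q →ₐ[ℝ] Module.End ℝ W)) :
    8 ∣ Module.finrank ℝ W := by
  obtain ⟨φ⟩ := h
  obtain ⟨v, hv⟩ := LinearMap.BilinForm.exists_orthogonal_basis
    (B := QuadraticMap.associated (R := ℝ) Q) ⟨QuadraticMap.associated_isSymm ℝ Q⟩
  let g := (CliffordAlgebra.even.ι Q).compr₂ φ
  let B := g.bilin
  have hB1 : ∀ m, B m m = algebraMap ℝ _ (Q m) := g.contract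
  have hB2 : ∀ a b c, B a b * B b c = Q b • B a c := g.contract_mid
  have key : ∃ e : Fin 5 → E, (∀ i, Q (e i) = -1) ∧
      ∀ i j, i ≠ j → Q (e i + e j) = Q (e i) + Q (e j) := by
    let k : Fin 5 → Fin (Module.finrank ℝ E) := Fin.castLE (hdim ▸ hr)
    have hk : Function.Injective k := Fin.castLE_injective _
    refine ⟨fun i => (Real.sqrt (-Q (v (k i))))⁻¹ • v (k i), fun i => ?_, fun i j hij => ?_⟩
    · have hneg := hQ _ (v.ne_zero (k i))
      have hs := Real.mul_self_sqrt (neg_nonneg.2 hneg.le)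
      have hp : Real.sqrt (-Q (v (k i))) ≠ 0 := (Real.sqrt_pos.2 (neg_pos.2 hneg)).ne'
      simp only [QuadraticMap.map_smul, smul_eq_mul]
      field_simp
      linarith
    · have h0 : QuadraticMap.associated (R := ℝ) Q (v (k i)) (v (k j)) = 0 :=
        hv (fun h => hij (hk h))
      rw [← QuadraticMap.isOrtho_def]
      rw [← QuadraticMap.associated_isOrtho]
      simp only [map_smul, LinearMap.smul_apply]
      rw [h0]; simp
  obtain ⟨e, he, ho⟩ := key
  have anti : ∀ i j, i ≠ j → B (e i) (e j) = - B (e j) (e i) := fun i j hij => by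
    have h1 := hB1 (e i + e j)
    rw [ho i j hij, map_add, map_add, map_add, LinearMap.add_apply, LinearMap.add_apply, hB1, hB1] at h1
    rw [eq_neg_iff_add_eq_zero]
    have : ∀ a b c d : Module.End ℝ W, a + c + (d + b) = a + b → d + c = 0 := by
      intro a b c d h
      have : a + c + (d + b) = a + b + (d + c) := by abel
      rw [this] at h
      simpa using h
    first | exact this _ _ _ _ h1 | (rw [add_comm]; exact this _ _ _ _ h1)
  have prod : ∀ i j, i ≠ 0 → B (e 0) (e i) * B (e 0) (e j) = B (e i) (e j) := fun i j hi => by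
    rw [anti 0 i hi.symm, neg_mul, hB2, he]; simp
  have sq : ∀ i, i ≠ 0 → ∀ x, B (e 0) (e i) (B (e 0) (e i) x) = -x := fun i hi x => by
    have := congrArg (fun f => f x) (prod i i hi)
    simpa [hB1, he] using this
  have ac : ∀ i j, i ≠ 0 → j ≠ 0 → j ≠ i → ∀ x, B (e 0) (e i) (B (e 0) (e j) x) =
      - B (e 0) (e j) (B (e 0) (e i) x) := fun i j hi hj hij x => by
    have := congrArg (fun f => f x) (prod i j hi)
    rw [anti i j hij.symm, ← prod j i hj] at this
    simpa using this
  apply eight_dvd (B (e 0) (e 1)) (B (e 0) (e 2)) (B (e 0) (e 3)) (B (e 0) (e 4)) <;>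
    first
    | exact sq _ (by decide)
    | exact ac _ _ (by decide) (by decide) (by decide)
end

section
/- Let V be a finite-dimensional real vector space with dim V > 4 and let Ω be a nondegenerate alternating bilinear form on V (i.e. for every x ≠ 0 there exists y with Ω(x, y) ≠ 0). If F is an alternating bilinear form on V such that the alternating 4-form Ω ∧ F vanishes identically, then F = 0. -/
theorem exists_aux {V : Type*} [AddCommGroup V] [Module ℝ V] [FiniteDimensional ℝ V]
    (hdim : 4 < Module.finrank ℝ V)
    (Ω : V →ₗ[ℝ] V →ₗ[ℝ] ℝ) (hΩalt : ∀ x, Ω x x = 0)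
    (hΩnd : ∀ x : V, x ≠ 0 → ∃ y, Ω x y ≠ 0) (a b : V) :
    ∃ c d, Ω a c = 0 ∧ Ω b c = 0 ∧ Ω a d = 0 ∧ Ω b d = 0 ∧ Ω c d ≠ 0 := by
  by_contra! H
  have hA : LinearMap.IsAlt Ω := hΩalt
  have hR : LinearMap.IsRefl Ω := hA.isRefl
  have hN : LinearMap.BilinForm.Nondegenerate Ω := by
    refine hR.nondegenerate_iff_separatingLeft.2 ?_
    intro x hx
    by_contra h
    obtain ⟨y, hy⟩ := hΩnd x h
    exact hy (hx y)
  classical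
  let S : Submodule ℝ V := Submodule.span ℝ (({a, b} : Finset V) : Set V)
  have hS : Module.finrank ℝ S ≤ 2 :=
    (finrank_span_finset_le_card _).trans Finset.card_le_two
  let W := LinearMap.BilinForm.orthogonal Ω S
  have h1 : Module.finrank ℝ W = _ := LinearMap.BilinForm.finrank_orthogonal hN S
  have h2 := LinearMap.BilinForm.finrank_orthogonal hN W
  have ha : a ∈ S := Submodule.subset_span (by simp)
  have hb : b ∈ S := Submodule.subset_span (by simp)
  have hle : W ≤ LinearMap.BilinForm.orthogonal Ω W := by
    intro d hd c hc
    exact H c d (hc a ha) (hc b hb) (hd a ha) (hd b hb)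
  have h3 := Submodule.finrank_mono hle
  omega

/-- Let `V` be a finite-dimensional real vector space of dimension `> 4`, `Ω` a
nondegenerate alternating bilinear form on `V`, and `F` an alternating bilinear form on `V`
such that the alternating 4-form `Ω ∧ F` vanishes identically. Then `F = 0`. -/
theorem stmt_9 {V : Type*} [AddCommGroup V] [Module ℝ V] [FiniteDimensional ℝ V]
    (hdim : 4 < Module.finrank ℝ V)
    (Ω : V →ₗ[ℝ] V →ₗ[ℝ] ℝ) (hΩalt : ∀ x, Ω x x = 0)
    (hΩnd : ∀ x : V, x ≠ 0 → ∃ y, Ω x y ≠ 0)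
    (F : V →ₗ[ℝ] V →ₗ[ℝ] ℝ) (hFalt : ∀ x, F x x = 0)
    (hwedge : ∀ a b c d : V,
      Ω a b * F c d - Ω a c * F b d + Ω a d * F b c
        + F a b * Ω c d - F a c * Ω b d + F a d * Ω b c = 0) :
    F = 0 := by
  have key : ∀ a b, Ω a b = 0 → F a b = 0 := by
    intro a b hab
    obtain ⟨c, d, h1, h2, h3, h4, h5⟩ := exists_aux hdim Ω hΩalt hΩnd a b
    have h := hwedge a b c d
    simp only [hab, h1, h2, h3, h4] at h
    have h' : F a b * Ω c d = 0 := by linarith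
    exact (mul_eq_zero.1 h').resolve_right h5
  have hA : LinearMap.IsAlt Ω := hΩalt
  ext a b
  obtain ⟨c, d, h1, h2, h3, h4, h5⟩ := exists_aux hdim Ω hΩalt hΩnd a b
  have hcb : Ω c b = 0 := hA.isRefl _ _ h2
  have h := hwedge a b c d
  simp only [h1, h2, h3, h4] at h
  have e := key (a + c) (Ω c d • b - Ω a b • d) (by
    simp [h3, hcb]; ring)
  simp [key _ _ h3, key _ _ hcb] at e
  have h' : F a b * Ω c d = 0 := by linarith
  simpa using (mul_eq_zero.1 h').resolve_right h5
end

section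
/- Let (V, ⟨·,·⟩) be a finite-dimensional real inner product space of dimension n, and let J be a skew-adjoint endomorphism of V with J ∘ J = -id. Let Ω be the alternating 2-form Ω(x,y) = ⟨J x, y⟩. For an alternating 2-form F on V and an orthonormal basis (e_a) of V, define the contraction operator on alternating 4-forms by (Λ G)(x,y) = (1/2) Σ_a G(e_a, J e_a, x, y), and set ⟨J, F⟩ := Σ_a F(e_a, J e_a). Then 2 Λ(Ω ∧ F) = (n - 4) F + ⟨J, F⟩ Ω. -/
open scoped RealInnerProductSpace

/-- The wedge product of two alternating bilinear forms `α`, `β`, as a 4-form: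
`(α ∧ β)(a,b,c,d) = α(a,b)β(c,d) - α(a,c)β(b,d) + α(a,d)β(b,c)
  + β(a,b)α(c,d) - β(a,c)α(b,d) + β(a,d)α(b,c)`. -/
def wedge2 {V : Type*} (α β : V → V → ℝ) : V → V → V → V → ℝ :=
  fun a b c d =>
    α a b * β c d - α a c * β b d + α a d * β b c
      + β a b * α c d - β a c * α b d + β a d * α b c

/-- Let `V` be an `n`-dimensional real inner product space, `J` a skew-adjoint complex
structure on `V`, `Ω(x,y) = ⟪J x, y⟫`, and `F` an alternating 2-form. With the contraction
`(Λ G)(x,y) = (1/2) ∑ₐ G(eₐ, J eₐ, x, y)` for an orthonormal basis `(eₐ)` and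
`⟨J, F⟩ = ∑ₐ F(eₐ, J eₐ)`, one has `2 Λ(Ω ∧ F) = (n - 4) F + ⟨J, F⟩ Ω`. -/
theorem stmt_10 {V : Type*} [NormedAddCommGroup V] [InnerProductSpace ℝ V]
    [FiniteDimensional ℝ V] (n : ℕ) (hn : Module.finrank ℝ V = n)
    (e : OrthonormalBasis (Fin n) ℝ V)
    (J : V →ₗ[ℝ] V)
    (hskew : ∀ x y : V, ⟪J x, y⟫ = -⟪x, J y⟫)
    (hJ : J ∘ₗ J = -LinearMap.id)
    (F : V →ₗ[ℝ] V →ₗ[ℝ] ℝ) (hFalt : ∀ x, F x x = 0) :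
    ∀ x y : V,
      2 * ((1 / 2 : ℝ) *
          ∑ a, wedge2 (fun p q => ⟪J p, q⟫) (fun p q => F p q) (e a) (J (e a)) x y) =
        ((n : ℝ) - 4) * F x y + (∑ a, F (e a) (J (e a))) * ⟪J x, y⟫ := by
  intro x y
  have hJJ : ∀ v, J (J v) = -v := fun v => by
    have := LinearMap.congr_fun hJ v
    simpa using this
  have key : ∀ (L : V →ₗ[ℝ] ℝ) (v : V), ∑ a, ⟪e a, v⟫ * L (e a) = L v := by
    intro L v
    conv_rhs => rw [← e.sum_repr' v]
    simp [map_sum]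
  have hsw : F y x = -F x y := by
    have h := hFalt (x + y)
    simp only [map_add, LinearMap.add_apply, hFalt] at h
    linarith
  have k1 := key ((F.flip y) ∘ₗ J) (J x)
  have k2 := key ((F.flip x) ∘ₗ J) (J y)
  have k3 := key (F.flip x) y
  have k4 := key (F.flip y) x
  simp only [LinearMap.comp_apply, LinearMap.flip_apply, hJJ, map_neg,
    LinearMap.neg_apply] at k1 k2 k3 k4
  have hterm : ∀ a, wedge2 (fun p q => ⟪J p, q⟫) (fun p q => F p q) (e a) (J (e a)) x y
      = F x y + ⟪e a, J x⟫ * F (J (e a)) y - ⟪e a, J y⟫ * F (J (e a)) x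
        + F (e a) (J (e a)) * ⟪J x, y⟫ + ⟪e a, y⟫ * F (e a) x - ⟪e a, x⟫ * F (e a) y := by
    intro a
    have h1 : ⟪J (e a), J (e a)⟫ = (1 : ℝ) := by
      rw [hskew, hJJ, inner_neg_right, neg_neg, real_inner_self_eq_norm_sq, e.norm_eq_one]
      norm_num
    simp only [wedge2]
    rw [h1, hJJ, hskew (e a) x, hskew (e a) y, inner_neg_left, inner_neg_left]
    ring
  simp only [hterm, Finset.sum_add_distrib, Finset.sum_sub_distrib, ← Finset.sum_mul]
  rw [k1, k2, k3, k4, hsw]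
  simp only [Finset.sum_const, Finset.card_univ, Fintype.card_fin, nsmul_eq_mul]
  ring
end

section
/- Let (V, ⟨·,·⟩) be a finite-dimensional real inner product space. Let R and S be skew-adjoint endomorphisms of V with R ∘ R = -id, S ∘ S = -id, and S ∘ R = -(R ∘ S), and set P := S ∘ R. Let W be a skew-adjoint endomorphism of V, and define the alternating 2-forms Ω_R(x,y) = ⟨R x, y⟩ and ω(x,y) = ⟨W x, y⟩. For an orthonormal basis (e_a) of V, define the contraction operator on alternating 4-forms by (Λ_P G)(x,y) = (1/2) Σ_a G(e_a, P e_a, x, y), and set ⟨P, W⟩ := -trace(P ∘ W). Then for all x, y ∈ V: (Λ_P(Ω_R ∧ ω))(x,y) = ⟨(S ∘ W - W ∘ S) x, y⟩ + (1/2) ⟨P, W⟩ Ω_R(x,y). -/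
open scoped RealInnerProductSpace

/-- Let `R, S` be anticommuting skew-adjoint complex structures on a finite-dimensional
real inner product space `V`, let `P := S ∘ R`, and let `W` be a skew-adjoint endomorphism.
With `Ω_R(x,y) = ⟪R x, y⟫`, `ω(x,y) = ⟪W x, y⟫`, the contraction
`(Λ_P G)(x,y) = (1/2) ∑ₐ G(eₐ, P eₐ, x, y)` for an orthonormal basis `(eₐ)`, and
`⟨P, W⟩ := -trace (P ∘ W)`, one has
`(Λ_P(Ω_R ∧ ω))(x,y) = ⟪(S∘W - W∘S) x, y⟫ + (1/2)⟨P, W⟩ Ω_R(x,y)`. -/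
theorem stmt_11 {V : Type*} [NormedAddCommGroup V] [InnerProductSpace ℝ V]
    [FiniteDimensional ℝ V] (n : ℕ)
    (e : OrthonormalBasis (Fin n) ℝ V)
    (R S W : V →ₗ[ℝ] V)
    (hRskew : ∀ x y : V, ⟪R x, y⟫ = -⟪x, R y⟫)
    (hSskew : ∀ x y : V, ⟪S x, y⟫ = -⟪x, S y⟫)
    (hWskew : ∀ x y : V, ⟪W x, y⟫ = -⟪x, W y⟫)
    (hR : R ∘ₗ R = -LinearMap.id)
    (hS : S ∘ₗ S = -LinearMap.id)
    (hanti : S ∘ₗ R = -(R ∘ₗ S)) :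
    ∀ x y : V,
      (1 / 2 : ℝ) *
          ∑ a, wedge2 (fun p q => ⟪R p, q⟫) (fun p q => ⟪W p, q⟫)
            (e a) ((S ∘ₗ R) (e a)) x y =
        ⟪(S ∘ₗ W - W ∘ₗ S) x, y⟫ +
          (1 / 2 : ℝ) * (-LinearMap.trace ℝ V ((S ∘ₗ R) ∘ₗ W)) * ⟪R x, y⟫ := by
  intro x y
  have hR' : ∀ v, R (R v) = -v := fun v => by simpa using LinearMap.congr_fun hR v
  have ha : ∀ v, R (S v) = -S (R v) := fun v => by
    have := LinearMap.congr_fun hanti v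
    simp only [LinearMap.comp_apply, LinearMap.neg_apply] at this
    rw [this, neg_neg]
  have key : ∀ (B A : V →ₗ[ℝ] V) (u w : V), (∀ p q : V, ⟪B p, q⟫ = -⟪p, B q⟫) →
      ∑ a, ⟪B (e a), u⟫ * ⟪A (e a), w⟫ = -⟪A (B u), w⟫ := by
    intro B A u w hB
    conv_rhs => rw [← e.sum_repr' (B u)]
    simp only [map_sum, map_smul, sum_inner, real_inner_smul_left, hB, neg_mul,
      Finset.sum_neg_distrib]
  have h1 : ∀ v, ⟪R v, S (R v)⟫ = 0 := fun v => by
    have := hSskew (R v) (R v)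
    rw [real_inner_comm] at this
    linarith
  have h4 : ∑ a, ⟪W (e a), S (R (e a))⟫ = -LinearMap.trace ℝ V ((S ∘ₗ R) ∘ₗ W) := by
    rw [LinearMap.trace_eq_sum_inner _ e, ← Finset.sum_neg_distrib]
    refine Finset.sum_congr rfl fun a _ => ?_
    have h := hSskew (R (W (e a))) (e a)
    have h' := hRskew (W (e a)) (S (e a))
    rw [ha, inner_neg_right] at h'
    simp only [LinearMap.comp_apply]
    rw [real_inner_comm]
    rw [real_inner_comm] at h'
    rw [real_inner_comm (S (R (W (e a)))) (e a)] at *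
    linarith [real_inner_comm (W (e a)) (S (R (e a))), real_inner_comm (R (W (e a))) (S (e a)),
      real_inner_comm (S (R (W (e a)))) (e a)]
  have k2 := key R (W ∘ₗ S ∘ₗ R) x y hRskew
  have k3 := key R (W ∘ₗ S ∘ₗ R) y x hRskew
  have k5 := key W (R ∘ₗ S ∘ₗ R) x y hWskew
  have k6 := key W (R ∘ₗ S ∘ₗ R) y x hWskew
  simp only [LinearMap.comp_apply, hR', ha, map_neg, inner_neg_left, neg_neg] at k2 k3 k5 k6
  have e3 : ⟪W (S y), x⟫ = ⟪S (W x), y⟫ := by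
    rw [hWskew, hSskew, neg_neg, real_inner_comm]
  have e6 : ⟪S (W y), x⟫ = ⟪W (S x), y⟫ := by
    rw [hSskew, hWskew, neg_neg, real_inner_comm]
  simp only [wedge2, LinearMap.comp_apply, Finset.sum_add_distrib, Finset.sum_sub_distrib,
    ← Finset.sum_mul, h1, h4, ha, hR', map_neg, inner_neg_left, neg_neg, k2, k3, k5, k6, e3, e6,
    LinearMap.sub_apply, inner_sub_left]
  simp
  ring
end

section
/- Let (V, ⟨·,·⟩) be a finite-dimensional real inner product space with dim V ≥ 8. Let I and J be skew-adjoint endomorphisms of V with I ∘ I = -id, J ∘ J = -id and I ∘ J = -(J ∘ I), and set K := I ∘ J. Define the alternating 2-forms Ω_I(x,y) = ⟨I x, y⟩, Ω_J(x,y) = ⟨J x, y⟩, Ω_K(x,y) = ⟨K x, y⟩, and the alternating 4-form Ω := Ω_I ∧ Ω_I + Ω_J ∧ Ω_J + Ω_K ∧ Ω_K (the Kraines form). If F is an alternating 2-form on V such that the alternating 6-form Ω ∧ F vanishes identically, then F = 0. -/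
open scoped RealInnerProductSpace

/-- The wedge product of a `p`-form and a `q`-form (given as functions on tuples of
vectors), via the standard shuffle formula: for alternating forms, averaging the signed sum
over all permutations with the factor `1/(p! q!)` agrees with the sum over `(p,q)`-shuffles
`(α ∧ β)(v₁,…,v_{p+q}) = ∑_σ sgn(σ) α(v_{σ(1)},…,v_{σ(p)}) β(v_{σ(p+1)},…,v_{σ(p+q)})`. -/
noncomputable def wedgeF {V : Type*} (p q : ℕ)
    (α : (Fin p → V) → ℝ) (β : (Fin q → V) → ℝ) : (Fin (p + q) → V) → ℝ :=
  fun v => (1 / ((p.factorial : ℝ) * (q.factorial : ℝ))) *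
    ∑ σ : Equiv.Perm (Fin (p + q)),
      ((Equiv.Perm.sign σ : ℤ) : ℝ) *
        (α (fun i => v (σ (Fin.castAdd q i))) * β (fun j => v (σ (Fin.natAdd p j))))

/-- The alternating 2-form associated with an endomorphism `T` of an inner product space:
`(x, y) ↦ ⟪T x, y⟫`. -/
noncomputable def twoForm {V : Type*} [NormedAddCommGroup V] [InnerProductSpace ℝ V]
    (T : V →ₗ[ℝ] V) : (Fin 2 → V) → ℝ :=
  fun v => ⟪T (v 0), v 1⟫

set_option linter.all false
set_option linter.unusedSimpArgs false

/-- signed sum over permutations -/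
noncomputable def altS {V : Type*} (n : ℕ) (g : (Fin n → V) → ℝ) (v : Fin n → V) : ℝ :=
  ∑ σ : Equiv.Perm (Fin n), ((Equiv.Perm.sign σ : ℤ) : ℝ) * g (fun i => v (σ i))

lemma altS_succ {V : Type*} (n : ℕ) (g : (Fin (n+1) → V) → ℝ) (v : Fin (n+1) → V) :
    altS (n+1) g v = ∑ p : Fin (n+1), (if p = 0 then (1:ℝ) else -1) *
      altS n (fun w => g (Fin.cons (v p) w)) (fun i => v (Equiv.swap 0 p i.succ)) := by
  unfold altS
  rw [← Equiv.sum_comp (Equiv.Perm.decomposeFin (n := n)).symm, Fintype.sum_prod_type]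
  refine Finset.sum_congr rfl fun p _ => ?_
  rw [Finset.mul_sum]
  refine Finset.sum_congr rfl fun τ _ => ?_
  have h : (fun i => v ((Equiv.Perm.decomposeFin.symm (p, τ)) i)) =
      (Fin.cons (v p) (fun i => v (Equiv.swap 0 p (τ i).succ)) : Fin (n+1) → V) := by
    funext i
    refine Fin.cases ?_ (fun i => ?_) i
    · simp
    · simp
  rw [h, Equiv.Perm.decomposeFin.symm_sign]
  split_ifs <;> simp

lemma altS_perm {V : Type*} (n : ℕ) (g : (Fin n → V) → ℝ) (v : Fin n → V)
    (τ : Equiv.Perm (Fin n)) :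
    altS n g (fun i => v (τ i)) = ((Equiv.Perm.sign τ : ℤ) : ℝ) * altS n g v := by
  unfold altS
  rw [← Equiv.sum_comp (Equiv.mulLeft τ⁻¹), Finset.mul_sum]
  refine Finset.sum_congr rfl fun σ _ => ?_
  simp [mul_assoc]

lemma altS_of_alt {V : Type*} (n : ℕ) (g : (Fin n → V) → ℝ) (v : Fin n → V)
    (hg : ∀ (τ : Equiv.Perm (Fin n)), g (fun i => v (τ i)) = ((Equiv.Perm.sign τ : ℤ) : ℝ) * g v) :
    altS n g v = n.factorial * g v := by
  unfold altS
  have : ∀ σ : Equiv.Perm (Fin n), ((Equiv.Perm.sign σ : ℤ) : ℝ) * g (fun i => v (σ i)) = g v := by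
    intro σ
    rw [hg, ← mul_assoc]
    rcases Int.units_eq_one_or (Equiv.Perm.sign σ) with h | h <;> simp [h]
  simp [this, Fintype.card_perm]

lemma wedgeF_eq {V : Type*} (p q : ℕ) (α : (Fin p → V) → ℝ) (β : (Fin q → V) → ℝ)
    (v : Fin (p+q) → V) : wedgeF p q α β v = (1 / ((p.factorial : ℝ) * (q.factorial : ℝ))) *
      altS (p+q) (fun w => α (fun i => w (Fin.castAdd q i)) * β (fun j => w (Fin.natAdd p j))) v := rfl

lemma wedgeF_perm {V : Type*} (p q : ℕ) (α : (Fin p → V) → ℝ) (β : (Fin q → V) → ℝ)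
    (v : Fin (p+q) → V) (τ : Equiv.Perm (Fin (p+q))) :
    wedgeF p q α β (fun i => v (τ i)) = ((Equiv.Perm.sign τ : ℤ) : ℝ) * wedgeF p q α β v := by
  rw [wedgeF_eq, wedgeF_eq, altS_perm]; ring

/-- pfaffian -/
def pf {V : Type*} (w : V → V → ℝ) (a b c d : V) : ℝ := w a b * w c d - w a c * w b d + w a d * w b c

lemma altS_zero {V : Type*} (g : (Fin 0 → V) → ℝ) (v : Fin 0 → V) : altS 0 g v = g v := by
  have : (fun i => v i) = v := rfl
  simp [altS]

lemma wedge22 {V : Type*} (w : V → V → ℝ) (hw : ∀ a b, w b a = - w a b) (v : Fin 4 → V) :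
    wedgeF 2 2 (fun u => w (u 0) (u 1)) (fun u => w (u 0) (u 1)) v = 2 * pf w (v 0) (v 1) (v 2) (v 3) := by
  rw [wedgeF_eq]
  change _ * altS 4 (fun u => w (u 0) (u (Fin.succ 0)) *
    w (u (Fin.succ (Fin.succ 0))) (u (Fin.succ (Fin.succ (Fin.succ 0))))) v = _
  simp only [altS_succ, altS_zero, Fin.sum_univ_succ, Fin.cons_zero, Fin.cons_succ]
  simp [Equiv.swap_apply_def]
  simp only [hw (v 0) (v 1), hw (v 0) (v 2), hw (v 1) (v 2), hw (v 0) (v 3), hw (v 1) (v 3), hw (v 2) (v 3), pf]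
  ring

lemma pf_perm {V : Type*} (w : V → V → ℝ) (hw : ∀ a b, w b a = - w a b) (v : Fin 4 → V)
    (τ : Equiv.Perm (Fin 4)) :
    pf w (v (τ 0)) (v (τ 1)) (v (τ 2)) (v (τ 3)) =
      ((Equiv.Perm.sign τ : ℤ) : ℝ) * pf w (v 0) (v 1) (v 2) (v 3) := by
  have h := wedgeF_perm 2 2 (fun u => w (u 0) (u 1)) (fun u => w (u 0) (u 1)) v τ
  rw [wedge22 w hw, wedge22 w hw] at h
  linarith

lemma wedge42 {V : Type*} (w f : V → V → ℝ) (hw : ∀ a b, w b a = - w a b)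
    (hf : ∀ a b, f b a = - f a b) (v : Fin 6 → V) :
    wedgeF 4 2 (fun u => pf w (u 0) (u 1) (u 2) (u 3)) (fun u => f (u 0) (u 1)) v =
      f (v 0) (v 1) * pf w (v 2) (v 3) (v 4) (v 5)
      - f (v 0) (v 2) * pf w (v 1) (v 3) (v 4) (v 5)
      + f (v 0) (v 3) * pf w (v 1) (v 2) (v 4) (v 5)
      - f (v 0) (v 4) * pf w (v 1) (v 2) (v 3) (v 5)
      + f (v 0) (v 5) * pf w (v 1) (v 2) (v 3) (v 4)
      + f (v 1) (v 2) * pf w (v 0) (v 3) (v 4) (v 5)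
      - f (v 1) (v 3) * pf w (v 0) (v 2) (v 4) (v 5)
      + f (v 1) (v 4) * pf w (v 0) (v 2) (v 3) (v 5)
      - f (v 1) (v 5) * pf w (v 0) (v 2) (v 3) (v 4)
      + f (v 2) (v 3) * pf w (v 0) (v 1) (v 4) (v 5)
      - f (v 2) (v 4) * pf w (v 0) (v 1) (v 3) (v 5)
      + f (v 2) (v 5) * pf w (v 0) (v 1) (v 3) (v 4)
      + f (v 3) (v 4) * pf w (v 0) (v 1) (v 2) (v 5)
      - f (v 3) (v 5) * pf w (v 0) (v 1) (v 2) (v 4)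
      + f (v 4) (v 5) * pf w (v 0) (v 1) (v 2) (v 3) := by
  rw [wedgeF_eq]
  have h1 : altS (4+2) (fun u => pf w (u (Fin.castAdd 2 0)) (u (Fin.castAdd 2 1)) (u (Fin.castAdd 2 2))
        (u (Fin.castAdd 2 3)) * f (u (Fin.natAdd 4 0)) (u (Fin.natAdd 4 1))) v
     = altS 6 (fun u => pf w (u (Fin.succ (Fin.succ 0))) (u (Fin.succ (Fin.succ 1)))
        (u (Fin.succ (Fin.succ 2))) (u (Fin.succ (Fin.succ 3))) * f (u 0) (u (Fin.succ 0))) v := by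
    unfold altS
    rw [← Equiv.sum_comp (Equiv.mulRight (finRotate 6 * finRotate 6))]
    refine Finset.sum_congr rfl fun σ _ => ?_
    have hs : Equiv.Perm.sign (σ * (finRotate 6 * finRotate 6)) = Equiv.Perm.sign σ := by
      rw [Equiv.Perm.sign_mul, Equiv.Perm.sign_mul, Int.units_mul_self, mul_one]
    simp only [Equiv.coe_mulRight, hs]
    rfl
  have h2 : ∀ (c : ℝ) (u : Fin 4 → V), altS 4 (fun u => pf w (u 0) (u 1) (u 2) (u 3) * c) u
      = 24 * (pf w (u 0) (u 1) (u 2) (u 3) * c) := by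
    intro c u
    rw [altS_of_alt]
    · norm_num [Nat.factorial]
    · intro τ; rw [pf_perm w hw]; ring
  refine (congrArg _ h1).trans ?_
  simp only [altS_succ 5, altS_succ 4, Fin.cons_zero, Fin.cons_succ, h2]
  simp only [Fin.sum_univ_succ]
  simp [Equiv.swap_apply_def, Nat.factorial]
  simp only [pf]
  simp only [hw (v 0) (v 1), hw (v 0) (v 2), hw (v 1) (v 2), hw (v 0) (v 3), hw (v 1) (v 3), hw (v 2) (v 3), hw (v 0) (v 4), hw (v 1) (v 4), hw (v 2) (v 4), hw (v 3) (v 4), hw (v 0) (v 5), hw (v 1) (v 5), hw (v 2) (v 5), hw (v 3) (v 5), hw (v 4) (v 5)]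
  simp only [hf (v 0) (v 1), hf (v 0) (v 2), hf (v 1) (v 2), hf (v 0) (v 3), hf (v 1) (v 3), hf (v 2) (v 3), hf (v 0) (v 4), hf (v 1) (v 4), hf (v 2) (v 4), hf (v 3) (v 4), hf (v 0) (v 5), hf (v 1) (v 5), hf (v 2) (v 5), hf (v 3) (v 5), hf (v 4) (v 5)]
  ring

lemma wedgeF_add {V : Type*} (p q : ℕ) (α α' : (Fin p → V) → ℝ) (β : (Fin q → V) → ℝ)
    (v : Fin (p+q) → V) : wedgeF p q (fun u => α u + α' u) β v =
      wedgeF p q α β v + wedgeF p q α' β v := by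
  unfold wedgeF
  simp only [add_mul, mul_add, Finset.sum_add_distrib]

lemma wedgeF_smul {V : Type*} (p q : ℕ) (c : ℝ) (α : (Fin p → V) → ℝ) (β : (Fin q → V) → ℝ)
    (v : Fin (p+q) → V) : wedgeF p q (fun u => c * α u) β v =
      c * wedgeF p q α β v := by
  unfold wedgeF
  simp only [Finset.mul_sum]
  refine Finset.sum_congr rfl fun σ _ => ?_
  ring

lemma key {V : Type*} [NormedAddCommGroup V] [InnerProductSpace ℝ V]
    (I J : V →ₗ[ℝ] V)
    (hIskew : ∀ x y : V, ⟪I x, y⟫ = -⟪x, I y⟫)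
    (hJskew : ∀ x y : V, ⟪J x, y⟫ = -⟪x, J y⟫)
    (hI : ∀ x, I (I x) = - x)
    (hJ : ∀ x, J (J x) = - x)
    (hanti : ∀ x, J (I x) = - I (J x))
    (F : V →ₗ[ℝ] V →ₗ[ℝ] ℝ) (hF : ∀ a b, F b a = - F a b)
    (hwedge : ∀ v : Fin 6 → V,
      wedgeF 4 2
        (fun w : Fin 4 → V =>
          wedgeF 2 2 (twoForm I) (twoForm I) w + wedgeF 2 2 (twoForm J) (twoForm J) w +
            wedgeF 2 2 (twoForm (I ∘ₗ J)) (twoForm (I ∘ₗ J)) w)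
        (fun p : Fin 2 → V => F (p 0) (p 1)) v = 0)
    (e x y : V) (he : ⟪e, e⟫ = 1)
    (hx : ⟪e, x⟫ = 0) (hxI : ⟪I e, x⟫ = 0) (hxJ : ⟪J e, x⟫ = 0) (hxK : ⟪I (J e), x⟫ = 0)
    (hy : ⟪e, y⟫ = 0) (hyI : ⟪I e, y⟫ = 0) (hyJ : ⟪J e, y⟫ = 0) (hyK : ⟪I (J e), y⟫ = 0) :
    3 * F x y + ⟪I x, y⟫ * (F e (I e) + F (J e) (I (J e)))
      + ⟪J x, y⟫ * (F e (J e) - F (I e) (I (J e)))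
      + ⟪I (J x), y⟫ * (F e (I (J e)) + F (I e) (J e)) = 0 := by
  have hwI : ∀ a b, ⟪I b, a⟫ = - ⟪I a, b⟫ := fun a b => by rw [hIskew, real_inner_comm]
  have hwJ : ∀ a b, ⟪J b, a⟫ = - ⟪J a, b⟫ := fun a b => by rw [hJskew, real_inner_comm]
  have hwK : ∀ a b, ⟪I (J b), a⟫ = - ⟪I (J a), b⟫ := fun a b => by
    rw [hIskew, hJskew, neg_neg, hanti, inner_neg_right, real_inner_comm]
  have h := hwedge ![e, I e, J e, I (J e), x, y]
  have hc : (fun w : Fin 4 → V =>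
          wedgeF 2 2 (twoForm I) (twoForm I) w + wedgeF 2 2 (twoForm J) (twoForm J) w +
            wedgeF 2 2 (twoForm (I ∘ₗ J)) (twoForm (I ∘ₗ J)) w) = fun w =>
          2 * pf (fun a b => ⟪I a, b⟫) (w 0) (w 1) (w 2) (w 3) +
          2 * pf (fun a b => ⟪J a, b⟫) (w 0) (w 1) (w 2) (w 3) +
          2 * pf (fun a b => ⟪I (J a), b⟫) (w 0) (w 1) (w 2) (w 3) := by
    funext w
    rw [← wedge22 _ hwI, ← wedge22 _ hwJ, ← wedge22 _ hwK]
    rfl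
  rw [hc, wedgeF_add, wedgeF_add, wedgeF_smul, wedgeF_smul, wedgeF_smul,
    wedge42 _ (fun a b => F a b) hwI hF, wedge42 _ (fun a b => F a b) hwJ hF,
    wedge42 _ (fun a b => F a b) hwK hF] at h
  have v0 : (![e, I e, J e, I (J e), x, y] : Fin 6 → V) 0 = e := rfl
  have v1 : (![e, I e, J e, I (J e), x, y] : Fin 6 → V) 1 = I e := rfl
  have v2 : (![e, I e, J e, I (J e), x, y] : Fin 6 → V) 2 = J e := rfl
  have v3 : (![e, I e, J e, I (J e), x, y] : Fin 6 → V) 3 = I (J e) := rfl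
  have v4 : (![e, I e, J e, I (J e), x, y] : Fin 6 → V) 4 = x := rfl
  have v5 : (![e, I e, J e, I (J e), x, y] : Fin 6 → V) 5 = y := rfl
  have z0 : ∀ a b : V, ⟪I a, I b⟫ = ⟪a, b⟫ := fun a b => by
    rw [hIskew, hI, inner_neg_right, neg_neg]
  have z1 : ∀ a b : V, ⟪J a, J b⟫ = ⟪a, b⟫ := fun a b => by
    rw [hJskew, hJ, inner_neg_right, neg_neg]
  have o1 : ⟪I e, e⟫ = 0 := by linarith [hwI e e]
  have o2 : ⟪J e, e⟫ = 0 := by linarith [hwJ e e]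
  have o3 : ⟪I (J e), e⟫ = 0 := by linarith [hwK e e]
  have o1' : ⟪e, I e⟫ = 0 := by rw [real_inner_comm]; exact o1
  have o2' : ⟪e, J e⟫ = 0 := by rw [real_inner_comm]; exact o2
  have o3' : ⟪e, I (J e)⟫ = 0 := by rw [real_inner_comm]; exact o3
  have o4 : ⟪J e, I e⟫ = 0 := by rw [hJskew, hanti, inner_neg_right, neg_neg]; exact o3'
  have o4' : ⟪I e, J e⟫ = 0 := by rw [real_inner_comm]; exact o4
  have o5 : ⟪I (J e), J e⟫ = 0 := by linarith [hwI (J e) (J e)]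
  have o5' : ⟪J e, I (J e)⟫ = 0 := by rw [real_inner_comm]; exact o5
  simp only [v0, v1, v2, v3, v4, v5, pf] at h
  simp only [hI, hJ, hanti, map_neg, inner_neg_left, inner_neg_right, neg_neg, z0, z1, he, hx, hxI, hxJ, hxK,
    hy, hyI, hyJ, hyK, o1, o2, o3, o4, o5, o1', o2', o3', o4', o5'] at h
  linarith

/-- orthogonality to the quaternionic line of `e` -/
def QP {V : Type*} [NormedAddCommGroup V] [InnerProductSpace ℝ V]
    (I J : V →ₗ[ℝ] V) (e x : V) : Prop :=
  ⟪e, x⟫ = 0 ∧ ⟪I e, x⟫ = 0 ∧ ⟪J e, x⟫ = 0 ∧ ⟪I (J e), x⟫ = 0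

/-- Let `V` be a real inner product space of dimension at least `8`, carrying a quaternionic
structure given by anticommuting skew-adjoint complex structures `I`, `J` and `K := I ∘ J`,
and let `Ω := Ω_I ∧ Ω_I + Ω_J ∧ Ω_J + Ω_K ∧ Ω_K` be the Kraines 4-form. If `F` is an
alternating 2-form on `V` such that the 6-form `Ω ∧ F` vanishes identically, then `F = 0`. -/
theorem stmt_12 {V : Type*} [NormedAddCommGroup V] [InnerProductSpace ℝ V]
    [FiniteDimensional ℝ V] (hdim : 8 ≤ Module.finrank ℝ V)
    (I J : V →ₗ[ℝ] V)
    (hIskew : ∀ x y : V, ⟪I x, y⟫ = -⟪x, I y⟫)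
    (hJskew : ∀ x y : V, ⟪J x, y⟫ = -⟪x, J y⟫)
    (hI : I ∘ₗ I = -LinearMap.id)
    (hJ : J ∘ₗ J = -LinearMap.id)
    (hanti : I ∘ₗ J = -(J ∘ₗ I))
    (F : V →ₗ[ℝ] V →ₗ[ℝ] ℝ) (hFalt : ∀ x, F x x = 0)
    (hwedge : ∀ v : Fin 6 → V,
      wedgeF 4 2
        (fun w : Fin 4 → V =>
          wedgeF 2 2 (twoForm I) (twoForm I) w + wedgeF 2 2 (twoForm J) (twoForm J) w +
            wedgeF 2 2 (twoForm (I ∘ₗ J)) (twoForm (I ∘ₗ J)) w)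
        (fun p : Fin 2 → V => F (p 0) (p 1)) v = 0) :
    F = 0 := by
  have hI' : ∀ x, I (I x) = - x := fun x => LinearMap.congr_fun hI x
  have hJ' : ∀ x, J (J x) = - x := fun x => LinearMap.congr_fun hJ x
  have han : ∀ x, J (I x) = - I (J x) := fun x => by
    have := LinearMap.congr_fun hanti x
    simp only [LinearMap.comp_apply, LinearMap.neg_apply] at this
    rw [this, neg_neg]
  have hF : ∀ a b, F b a = - F a b := fun a b => by
    have := hFalt (a + b)
    simp only [map_add, LinearMap.add_apply, hFalt] at this
    linarith
  have hkey := key I J hIskew hJskew hI' hJ' han F hF hwedge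
  have z0 : ∀ a b : V, ⟪I a, I b⟫ = ⟪a, b⟫ := fun a b => by
    rw [hIskew, hI', inner_neg_right, neg_neg]
  have z1 : ∀ a b : V, ⟪J a, J b⟫ = ⟪a, b⟫ := fun a b => by
    rw [hJskew, hJ', inner_neg_right, neg_neg]
  have hwI : ∀ a b, ⟪I b, a⟫ = - ⟪I a, b⟫ := fun a b => by rw [hIskew, real_inner_comm]
  have hwJ : ∀ a b, ⟪J b, a⟫ = - ⟪J a, b⟫ := fun a b => by rw [hJskew, real_inner_comm]
  have hwK : ∀ a b, ⟪I (J b), a⟫ = - ⟪I (J a), b⟫ := fun a b => by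
    rw [hIskew, hJskew, neg_neg, han, inner_neg_right, real_inner_comm]
  have o1 : ∀ e, ⟪I e, e⟫ = 0 := fun e => by linarith [hwI e e]
  have o2 : ∀ e, ⟪J e, e⟫ = 0 := fun e => by linarith [hwJ e e]
  have o3 : ∀ e, ⟪I (J e), e⟫ = 0 := fun e => by linarith [hwK e e]
  have o1' : ∀ e, ⟪e, I e⟫ = 0 := fun e => by rw [real_inner_comm]; exact o1 e
  have o2' : ∀ e, ⟪e, J e⟫ = 0 := fun e => by rw [real_inner_comm]; exact o2 e
  have o3' : ∀ e, ⟪e, I (J e)⟫ = 0 := fun e => by rw [real_inner_comm]; exact o3 e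
  have o4 : ∀ e, ⟪J e, I e⟫ = 0 := fun e => by
    rw [hJskew, han, inner_neg_right, neg_neg]; exact o3' e
  have o4' : ∀ e, ⟪I e, J e⟫ = 0 := fun e => by rw [real_inner_comm]; exact o4 e
  -- closure properties
  have pI : ∀ e x, QP I J e x → QP I J e (I x) := by
    rintro e x ⟨h0, h1, h2, h3⟩
    refine ⟨?_, ?_, ?_, ?_⟩
    · linarith [hIskew e x]
    · rw [z0, h0]
    · linarith [hIskew (J e) x]
    · rw [z0, h2]
  have pJ : ∀ e x, QP I J e x → QP I J e (J x) := by
    rintro e x ⟨h0, h1, h2, h3⟩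
    refine ⟨?_, ?_, ?_, ?_⟩
    · linarith [hJskew e x]
    · have := hJskew (I e) x
      rw [han, inner_neg_left] at this
      linarith
    · rw [z1, h0]
    · have := hJskew (I (J e)) x
      rw [han, hJ', map_neg, neg_neg] at this
      linarith
  have pS : ∀ e x, QP I J e x → QP I J x e := by
    rintro e x ⟨h0, h1, h2, h3⟩
    refine ⟨?_, ?_, ?_, ?_⟩
    · rw [real_inner_comm, h0]
    · rw [hwI, h1, neg_zero]
    · rw [hwJ, h2, neg_zero]
    · rw [hwK, h3, neg_zero]
  have pIl : ∀ e x, QP I J e x → QP I J (I e) x := fun e x h => pS _ _ (pI _ _ (pS _ _ h))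
  have pJl : ∀ e x, QP I J e x → QP I J (J e) x := fun e x h => pS _ _ (pJ _ _ (pS _ _ h))
  have psm : ∀ e x (c : ℝ), QP I J e x → QP I J e (c • x) := by
    rintro e x c ⟨h0, h1, h2, h3⟩
    refine ⟨?_, ?_, ?_, ?_⟩ <;> simp only [inner_smul_right, h0, h1, h2, h3, mul_zero]
  have psl : ∀ e x (c : ℝ), QP I J e x → QP I J (c • e) x := fun e x c h =>
    pS _ _ (psm _ _ c (pS _ _ h))
  have nrm : ∀ x : V, x ≠ 0 → ∃ c : ℝ, c ≠ 0 ∧ ⟪c • x, c • x⟫ = 1 := by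
    intro x hx
    have hn : ‖x‖ ≠ 0 := norm_ne_zero_iff.mpr hx
    refine ⟨‖x‖⁻¹, inv_ne_zero hn, ?_⟩
    rw [inner_smul_left, inner_smul_right, real_inner_self_eq_norm_sq]
    simp only [conj_trivial]
    field_simp
  have ex : ∀ e : V, ∃ y, ⟪y, y⟫ = 1 ∧ QP I J e y := by
    intro e
    let b : Fin 4 → V := ![e, I e, J e, I (J e)]
    let S := Submodule.span ℝ (Set.range b)
    have hS : Module.finrank ℝ S ≤ 4 := by
      have := finrank_range_le_card (R := ℝ) b
      simpa [Set.finrank] using this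
    have hne : Sᗮ ≠ ⊥ := by
      intro hb
      have := Submodule.finrank_add_finrank_orthogonal S
      rw [hb, finrank_bot] at this
      omega
    obtain ⟨y, hy, hy0⟩ := Submodule.exists_mem_ne_zero_of_ne_bot hne
    obtain ⟨c, hc, h1⟩ := nrm y hy0
    refine ⟨c • y, h1, psm _ _ _ ?_⟩
    have hb : ∀ i, ⟪b i, y⟫ = 0 := fun i =>
      (Submodule.mem_orthogonal S y).mp hy _ (Submodule.subset_span ⟨i, rfl⟩)
    exact ⟨hb 0, hb 1, hb 2, hb 3⟩
  have stepf : ∀ e y, ⟪e, e⟫ = 1 → ⟪y, y⟫ = 1 → QP I J e y →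
      3 * (F y (I y) + F (J y) (I (J y))) + 2 * (F e (I e) + F (J e) (I (J e))) = 0 ∧
      3 * (F y (J y) - F (I y) (I (J y))) + 2 * (F e (J e) - F (I e) (I (J e))) = 0 ∧
      3 * (F y (I (J y)) + F (I y) (J y)) + 2 * (F e (I (J e)) + F (I e) (J e)) = 0 := by
    intro e y he hy h
    have kk : ∀ a b, QP I J e a → QP I J e b →
      3 * F a b + ⟪I a, b⟫ * (F e (I e) + F (J e) (I (J e)))
      + ⟪J a, b⟫ * (F e (J e) - F (I e) (I (J e)))
      + ⟪I (J a), b⟫ * (F e (I (J e)) + F (I e) (J e)) = 0 := fun a b ha hb =>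
      hkey e a b he ha.1 ha.2.1 ha.2.2.1 ha.2.2.2 hb.1 hb.2.1 hb.2.2.1 hb.2.2.2
    have hi := pI _ _ h
    have hj := pJ _ _ h
    have hk := pI _ _ hj
    have e1 := kk _ _ h hi
    have e2 := kk _ _ hj hk
    have e3 := kk _ _ h hj
    have e4 := kk _ _ hi hk
    have e5 := kk _ _ h hk
    have e6 := kk _ _ hi hj
    simp only [hI', hJ', han, map_neg, inner_neg_left, inner_neg_right, neg_neg, z0, z1, hy,
      o1, o2, o3, o4, o1', o2', o3', o4'] at e1 e2 e3 e4 e5 e6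
    refine ⟨?_, ?_, ?_⟩ <;> linarith
  have van : ∀ e x y, ⟪e, e⟫ = 1 → QP I J e x → QP I J e y → F x y = 0 := by
    intro e x y he hx hy
    obtain ⟨u, hu, heu⟩ := ex e
    obtain ⟨a1, a2, a3⟩ := stepf e u he hu heu
    obtain ⟨b1, b2, b3⟩ := stepf u e hu he (pS _ _ heu)
    have c1 : F e (I e) + F (J e) (I (J e)) = 0 := by linarith
    have c2 : F e (J e) - F (I e) (I (J e)) = 0 := by linarith
    have c3 : F e (I (J e)) + F (I e) (J e) = 0 := by linarith
    have := hkey e x y he hx.1 hx.2.1 hx.2.2.1 hx.2.2.2 hy.1 hy.2.1 hy.2.2.1 hy.2.2.2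
    rw [c1, c2, c3] at this
    linarith
  have dI : ∀ x, F x (I x) = 0 := fun x => by
    obtain ⟨u, hu, h⟩ := ex x
    exact van u _ _ hu (pS _ _ h) (pI _ _ (pS _ _ h))
  have dJ : ∀ x, F x (J x) = 0 := fun x => by
    obtain ⟨u, hu, h⟩ := ex x
    exact van u _ _ hu (pS _ _ h) (pJ _ _ (pS _ _ h))
  have dK : ∀ x, F x (I (J x)) = 0 := fun x => by
    obtain ⟨u, hu, h⟩ := ex x
    exact van u _ _ hu (pS _ _ h) (pI _ _ (pJ _ _ (pS _ _ h)))
  have bI : ∀ x y, F x (I y) = F (I x) y := by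
    intro x y
    have e1 := dI (x + y)
    simp only [map_add, LinearMap.add_apply, dI] at e1
    linarith [hF (I x) y]
  have bJ : ∀ x y, F x (J y) = F (J x) y := by
    intro x y
    have e1 := dJ (x + y)
    simp only [map_add, LinearMap.add_apply, dJ] at e1
    linarith [hF (J x) y]
  have bK : ∀ x y, F x (I (J y)) = F (I (J x)) y := by
    intro x y
    have e1 := dK (x + y)
    simp only [map_add, LinearMap.add_apply, dK] at e1
    linarith [hF (I (J x)) y]
  have hz : ∀ x y, F (I (J x)) y = 0 := by
    intro x y
    have e1 := bK x y
    rw [bI, bJ, han, map_neg, LinearMap.neg_apply] at e1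
    linarith
  ext x y
  have e1 := hz (I (J x)) y
  simp only [han, hJ', hI', map_neg, neg_neg, LinearMap.neg_apply] at e1
  simp only [LinearMap.zero_apply]
  linarith
end
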